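/- Let G be a graph that can be decomposed into an ESET graph K on n vertices with a connection vertex u ∈ V(K), and a path P with V(P) ∩ V(K) = {u}. Then pn(G) ≤ ⌈n/2⌉. -/

import Mathlib

open SimpleGraph

variable {V : Type*}

/-- A path decomposition of a simple graph `G`: a list of nontrivial paths of `G`
that are pairwise edge-disjoint and together cover every edge of `G`. -/
structure PathDecomp (G : SimpleGraph V) where
  paths : List (Σ a b : V, G.Walk a b)
  nontrivial : ∀ p ∈ paths, 0 < p.2.2.length
  isPath : ∀ p ∈ paths, p.2.2.IsPath
  edgeDisjoint : paths.Pairwise fun p q => ∀ e, e ∈ p.2.2.edges → e ∉ q.2.2.edges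
  covers : ∀ e ∈ G.edgeSet, ∃ p ∈ paths, e ∈ p.2.2.edges

/-- Cardinality of a path decomposition. -/
def pdCard {G : SimpleGraph V} (D : PathDecomp G) : ℕ := D.paths.length

/-- `ends D u` is the number of paths in `D` having `u` as an end vertex. -/
def ends [DecidableEq V] {G : SimpleGraph V} (D : PathDecomp G) (u : V) : ℕ :=
  (D.paths.filter fun p => p.1 = u ∨ p.2.1 = u).length

/-- The path number: minimum cardinality of a path decomposition. -/
noncomputable def pn (G : SimpleGraph V) : ℕ :=
  sInf {n | ∃ D : PathDecomp G, pdCard D = n}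

/-- Degree as the `ncard` of the neighbor set (no decidability needed). -/
noncomputable def ndeg (G : SimpleGraph V) (v : V) : ℕ := {w | G.Adj v w}.ncard

/-- A SET graph: the set of even-degree vertices consists of exactly three
mutually adjacent vertices, and every odd-degree vertex has at least two
even-degree neighbors. -/
def IsSETGraph (G : SimpleGraph V) : Prop :=
  (∃ a b c : V, a ≠ b ∧ a ≠ c ∧ b ≠ c ∧
      {v : V | Even (ndeg G v)} = {a, b, c} ∧
      G.Adj a b ∧ G.Adj a c ∧ G.Adj b c) ∧
  ∀ v : V, Odd (ndeg G v) →
    ∃ w₁ w₂ : V, w₁ ≠ w₂ ∧ G.Adj v w₁ ∧ G.Adj v w₂ ∧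
      Even (ndeg G w₁) ∧ Even (ndeg G w₂)


/-- An extended SET (ESET) graph with connection vertex `u`: either `K` itself is a
SET graph (type (i), every vertex is a connection vertex), or `K` is obtained from a
SET graph by adding the new vertex `u` adjacent to one odd-degree vertex and one
even-degree vertex of it (type (ii)). -/
def IsESETWithConn (K : SimpleGraph V) (u : V) : Prop :=
  IsSETGraph K ∨
  ∃ (x y : V) (hx : x ≠ u) (hy : y ≠ u),
    K.neighborSet u = {x, y} ∧
    IsSETGraph (K.induce {v | v ≠ u}) ∧
    Odd (ndeg (K.induce {v | v ≠ u}) ⟨x, hx⟩) ∧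
    Even (ndeg (K.induce {v | v ≠ u}) ⟨y, hy⟩)

/-!
The main tool is Lovász's rotation argument. Suppose that every neighbour of `x` is an end of some
path of a path system. If a path ends at `y`, a missing edge `xy` can be added at the cost of
moving that end from `y` to `x`: prepend `x` to the path, or, if `x` already lies on it, exchange
`xy` for the edge by which the path enters `x` and continue with that edge. Adding the edges of a
graph one by one, every assignment of end numbers to the vertices that has the parities of the
degrees and vanishes at no more than one vertex is realised by a path system.

With no end at one even vertex, two at the others and one at each odd vertex, a graph with `n`
vertices, `e` of them even, is decomposed into `(n + e - 2) / 2` paths, that is `(n + 1) / 2` if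
`e = 3`. If two path ends lie at the connection vertex `u`, then they can be extended by the two
parts of `P`. An even `u` has two ends by choosing another vertex without ends. If `u` is odd with
even neighbours `w₁` and `w₂`, delete `uw₁` and `uw₂`: this saves one path, as there are two fewer
even vertices. One of the two edges can be put back by rotations, which brings a second end to `u`,
and the other one becomes a path of its own. If `u` is a new vertex, its two edges are added by
rotations, each of which moves an end to `u`.
-/

/-! ### The graph of consecutive entries of a list -/

/-- The graph formed by the edges that a path with vertex list `l` traverses. -/
def consecGraph (l : List V) : SimpleGraph V := .fromRel fun v w => [v, w] <:+: l

section ConsecGraph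

variable {l A : List V} {v w x : V}

lemma consecGraph_adj_of_infix (hl : l.Nodup) (h : [v, w] <:+: l) : (consecGraph l).Adj v w :=
  ⟨by simpa using h.sublist.nodup hl, .inl h⟩

lemma mem_of_consecGraph_adj (h : (consecGraph l).Adj v w) : v ∈ l := by
  rcases h.2 with h | h <;> exact h.subset (by simp)

lemma consecGraph_adj_iff (hl : l.Nodup) :
    (consecGraph l).Adj v w ↔ [v, w] <:+: l ∨ [w, v] <:+: l :=
  ⟨And.right, fun h => h.elim (consecGraph_adj_of_infix hl)
    fun h => (consecGraph_adj_of_infix hl h).symm⟩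

lemma consecGraph_singleton : consecGraph [x] = ⊥ := by
  ext v w
  simp [consecGraph, List.infix_cons_iff]

lemma consecGraph_reverse : consecGraph l.reverse = consecGraph l := by
  ext v w
  simp [consecGraph, ← List.reverse_infix (l₂ := l), or_comm]

lemma consecGraph_cons_cons : consecGraph (v :: w :: l) = edge v w ⊔ consecGraph (w :: l) := by
  ext a b
  simp only [consecGraph, fromRel_adj, sup_adj, edge_adj, List.infix_cons_iff (a := v),
    List.cons_prefix_cons, List.nil_prefix, and_true]
  tauto

lemma consecGraph_append_cons_of_ne_nil (hA : A ≠ []) :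
    consecGraph (A ++ x :: l) = consecGraph A ⊔ edge (A.getLast hA) x ⊔ consecGraph (x :: l) := by
  induction A with
  | nil => exact absurd rfl hA
  | cons a A ih =>
    cases A with
    | nil => simp [consecGraph_cons_cons, consecGraph_singleton]
    | cons b A => simp_all [consecGraph_cons_cons, sup_assoc]

lemma consecGraph_append_cons :
    consecGraph (A ++ x :: l) = consecGraph (A ++ [x]) ⊔ consecGraph (x :: l) := by
  rcases eq_or_ne A [] with rfl | hA
  · simp [consecGraph_singleton]
  · rw [consecGraph_append_cons_of_ne_nil hA, consecGraph_append_cons_of_ne_nil hA,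
      consecGraph_singleton, sup_bot_eq]

lemma consecGraph_map {W : Type*} (f : V ↪ W) :
    consecGraph (l.map f) = (consecGraph l).map f := by
  have hpair (a b : W) :
      [a, b] <:+: l.map f ↔ ∃ v w, [v, w] <:+: l ∧ f v = a ∧ f w = b := by
    rw [List.infix_map_iff]
    constructor
    · rintro ⟨l', hl', h⟩
      obtain ⟨v, l', rfl, rfl, hw⟩ := List.map_eq_cons_iff.1 h.symm
      obtain ⟨w, rfl, rfl⟩ := List.map_eq_singleton_iff.1 hw
      exact ⟨v, w, hl', rfl, rfl⟩
    · rintro ⟨v, w, h, rfl, rfl⟩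
      exact ⟨[v, w], h, rfl⟩
  ext a b
  simp only [consecGraph, fromRel_adj, map_adj, hpair]
  grind [f.injective.eq_iff]

lemma pair_infix_append_cons_iff {B : List V} (hA : x ∉ A) (hB : x ∉ B) :
    [w, x] <:+: A ++ x :: B ↔ A.getLast? = some w := by
  induction A with
  | nil =>
    have hpre : ¬ [x] <+: B := fun h => hB (h.subset (by simp))
    have hinf : ¬ [w, x] <:+: B := fun h => hB (h.subset (by simp))
    simp [List.infix_cons_iff, hpre, hinf]
  | cons a A ih =>
    cases A with
    | nil => grind [List.infix_cons_iff]
    | cons b A => simp_all [List.infix_cons_iff (a := a)]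

lemma not_pair_infix_swap (hl : l.Nodup) (h : [v, w] <:+: l) : ¬ [w, v] <:+: l := by
  obtain ⟨A, B, rfl⟩ := h
  have hl' : (A ++ v :: w :: B).Nodup := by simpa using hl
  rw [List.append_assoc, List.cons_append, List.cons_append, List.nil_append,
    pair_infix_append_cons_iff (by grind) (by grind)]
  intro hw
  have := List.mem_of_getLast? hw
  grind

end ConsecGraph

/-! ### Degrees -/

lemma ndeg_sup [Finite V] {G H : SimpleGraph V} (h : Disjoint G H) :
    ndeg (G ⊔ H) = ndeg G + ndeg H := by
  ext v
  exact Set.ncard_union_eq (Set.disjoint_left.2 fun w => disjoint_left.1 h v w)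

lemma ndeg_edge [DecidableEq V] {x y : V} (hxy : x ≠ y) :
    ndeg (edge x y) = Pi.single x 1 + Pi.single y 1 := by
  funext v
  obtain rfl | hvx := eq_or_ne v x
  · have hset : {w | (edge v y).Adj v w} = {y} := by ext; grind
    simp [ndeg, hset, hxy]
  obtain rfl | hvy := eq_or_ne v y
  · have hset : {w | (edge x v).Adj v w} = {x} := by ext; grind
    simp [ndeg, hset, hxy.symm]
  · simp [ndeg, edge_adj, hvx, hvy]

lemma ndeg_sup_edge [Finite V] [DecidableEq V] {G : SimpleGraph V} {x y : V} (hxy : x ≠ y)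
    (hadj : ¬ G.Adj x y) : ndeg (G ⊔ edge x y) = ndeg G + Pi.single x 1 + Pi.single y 1 := by
  rw [ndeg_sup ((disjoint_edge G).2 hadj), ndeg_edge hxy, add_assoc]

/-- A family of pairwise edge-disjoint paths on the vertex type `V`, each given by its list of
vertices. One-vertex paths are allowed. The two ends of the `i`-th path are encoded by `(i, false)`
for the start of the list and `(i, true)` for its last vertex. -/
structure PathSystem (ι V : Type*) where
  path : ι → List V
  ne_nil : ∀ i, path i ≠ []
  nodup : ∀ i, (path i).Nodup
  disjoint : Pairwise fun i j => Disjoint (consecGraph (path i)) (consecGraph (path j))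

namespace PathSystem

variable {ι : Type*} (D : PathSystem ι V)

/-- The graph decomposed by a path system: the union of its paths. -/
def graph : SimpleGraph V := ⨆ i, consecGraph (D.path i)

/-- The path of the end `ε`, traversed starting from that end. -/
def fromEnd (ε : ι × Bool) : List V := if ε.2 then (D.path ε.1).reverse else D.path ε.1

lemma fromEnd_ne_nil (ε : ι × Bool) : D.fromEnd ε ≠ [] := by
  rw [fromEnd]
  split_ifs
  · simpa using D.ne_nil ε.1
  · exact D.ne_nil ε.1

lemma nodup_fromEnd (ε : ι × Bool) : (D.fromEnd ε).Nodup := by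
  have := D.nodup ε.1
  grind [fromEnd]

lemma fromEnd_eq_reverse_of_ne {ε ε' : ι × Bool} (hne : ε' ≠ ε) (h : ε'.1 = ε.1) :
    D.fromEnd ε' = (D.fromEnd ε).reverse := by
  obtain ⟨i, b⟩ := ε
  obtain ⟨j, b'⟩ := ε'
  cases b <;> cases b' <;> simp_all [fromEnd]

lemma consecGraph_fromEnd (ε : ι × Bool) :
    consecGraph (D.fromEnd ε) = consecGraph (D.path ε.1) := by
  rw [fromEnd]
  split_ifs
  · exact consecGraph_reverse
  · rfl

/-- The end vertex at the end `ε`. -/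
def tip (ε : ι × Bool) : V := (D.fromEnd ε).head (D.fromEnd_ne_nil ε)

/-- The union of the paths other than the one to which the end `ε` belongs. -/
def others (ε : ι × Bool) : SimpleGraph V := ⨆ j ≠ ε.1, consecGraph (D.path j)

lemma graph_eq_sup_others (ε : ι × Bool) :
    D.graph = consecGraph (D.fromEnd ε) ⊔ D.others ε := by
  rw [consecGraph_fromEnd, graph, others, iSup_split_single _ ε.1]

lemma consecGraph_fromEnd_le (ε : ι × Bool) : consecGraph (D.fromEnd ε) ≤ D.graph :=
  D.graph_eq_sup_others ε ▸ le_sup_left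

lemma adj_of_pair_infix_fromEnd {ε : ι × Bool} {v w : V} (h : [v, w] <:+: D.fromEnd ε) :
    D.graph.Adj v w :=
  D.consecGraph_fromEnd_le ε (consecGraph_adj_of_infix (D.nodup_fromEnd ε) h)

lemma others_le (ε : ι × Bool) : D.others ε ≤ D.graph :=
  D.graph_eq_sup_others ε ▸ le_sup_right

lemma disjoint_others (ε : ι × Bool) : Disjoint (consecGraph (D.fromEnd ε)) (D.others ε) := by
  rw [consecGraph_fromEnd]
  exact disjoint_iSup₂_iff.2 fun j hj => D.disjoint hj.symm

lemma eq_of_pair_infix_fromEnd {ε ε' : ι × Bool} {v w : V} (h : [v, w] <:+: D.fromEnd ε)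
    (h' : [v, w] <:+: D.fromEnd ε') : ε = ε' := by
  have hadj (δ : ι × Bool) (hδ : [v, w] <:+: D.fromEnd δ) :
      (consecGraph (D.path δ.1)).Adj v w :=
    D.consecGraph_fromEnd δ ▸ consecGraph_adj_of_infix (D.nodup_fromEnd δ) hδ
  have hpath : ε.1 = ε'.1 := by
    by_contra hne
    have := disjoint_left.1 (D.disjoint hne) v w (hadj ε h)
    exact this (hadj ε' h')
  obtain ⟨i, b⟩ := ε
  obtain ⟨j, b'⟩ := ε'
  obtain rfl : i = j := hpath
  have := not_pair_infix_swap (v := v) (w := w) (D.nodup i)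
  have := List.reverse_infix (l₁ := [w, v]) (l₂ := D.path i)
  cases b <;> cases b' <;> simp_all [fromEnd]

section EndCount

variable [Fintype ι] [DecidableEq V]

/-- The number of ends of paths located at `v`; a one-vertex path `[v]` has both its ends there. -/
def endCount (v : V) : ℕ := Finset.card {ε | D.tip ε = v}

lemma endCount_eq_sum : D.endCount = ∑ ε, Pi.single (D.tip ε) 1 := by
  ext v
  rw [endCount, Finset.card_filter, Finset.sum_apply]
  exact Finset.sum_congr rfl fun ε _ => by simp [Pi.single_apply, eq_comm]

lemma one_le_endCount_iff {v : V} : 1 ≤ D.endCount v ↔ ∃ ε, D.tip ε = v := by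
  rw [endCount, Finset.one_le_card, Finset.filter_nonempty_iff]
  simp only [Finset.mem_univ, true_and]

lemma sum_endCount [Fintype V] : ∑ v, D.endCount v = 2 * Fintype.card ι := by
  simp [endCount_eq_sum, Finset.sum_apply, Finset.sum_comm (s := (.univ : Finset V)), mul_comm]

end EndCount

/-! ### Replacing one path -/

section Replace

variable {D} {D' : PathSystem ι V} {ε : ι × Bool} {l : List V}

lemma exists_replace (hne : l ≠ []) (hnd : l.Nodup)
    (hdisj : Disjoint (consecGraph l) (D.others ε)) :
    ∃ D' : PathSystem ι V, D'.fromEnd ε = l ∧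
      (∀ ε', ε'.1 ≠ ε.1 → D'.fromEnd ε' = D.fromEnd ε') ∧
      D'.graph = consecGraph l ⊔ D.others ε := by
  classical
  obtain ⟨p, hp, hpne, hpnd, hpl⟩ : ∃ p : List V, (if ε.2 then p.reverse else p) = l ∧
      p ≠ [] ∧ p.Nodup ∧ consecGraph p = consecGraph l := by
    refine ⟨if ε.2 then l.reverse else l, ?_⟩
    cases ε.2 <;> simp [hne, hnd, consecGraph_reverse]
  have hpj (j) (hj : j ≠ ε.1) := disjoint_iSup₂_iff.1 (hpl ▸ hdisj) j hj
  let D' : PathSystem ι V :=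
    { path := Function.update D.path ε.1 p
      ne_nil := (Function.forall_update_iff _ fun _ => (· ≠ [])).2 ⟨hpne, fun i _ => D.ne_nil i⟩
      nodup := (Function.forall_update_iff _ fun _ => List.Nodup).2 ⟨hpnd, fun i _ => D.nodup i⟩
      disjoint := by
        intro i j hij
        obtain rfl | hi := eq_or_ne i ε.1
        · simpa [hij.symm] using hpj j hij.symm
        · obtain rfl | hj := eq_or_ne j ε.1
          · simpa [hi] using (hpj i hi).symm
          · simpa [hi, hj] using D.disjoint hij }
  have hε : D'.fromEnd ε = l := by simpa [D', fromEnd] using hp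
  refine ⟨D', hε, fun ε' hε' => by simp [D', fromEnd, hε'], ?_⟩
  rw [graph_eq_sup_others _ ε, hε]
  congr 1
  exact iSup_congr fun j => iSup_congr fun hj => by simp [D', hj]

lemma tip_eq_of_ne (heq : ∀ ε', ε'.1 ≠ ε.1 → D'.fromEnd ε' = D.fromEnd ε')
    (hlast : (D'.fromEnd ε).getLast (D'.fromEnd_ne_nil ε) =
      (D.fromEnd ε).getLast (D.fromEnd_ne_nil ε)) :
    ∀ ε' ≠ ε, D'.tip ε' = D.tip ε' := by
  intro ε' hε'
  by_cases hi : ε'.1 = ε.1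
  · simpa [tip, fromEnd_eq_reverse_of_ne _ hε' hi, List.head_reverse] using hlast
  · simp only [tip, heq ε' hi]

lemma endCount_add_single [Fintype ι] [DecidableEq V] (h : ∀ ε' ≠ ε, D'.tip ε' = D.tip ε') :
    D'.endCount + Pi.single (D.tip ε) 1 = D.endCount + Pi.single (D'.tip ε) 1 := by
  classical
  rw [endCount_eq_sum, endCount_eq_sum, ← Finset.add_sum_erase _ _ (Finset.mem_univ ε),
    ← Finset.add_sum_erase (a := ε) (f := fun ε => Pi.single (D.tip ε) 1) _ (Finset.mem_univ ε),
    Finset.sum_congr rfl fun ε' hε' => by rw [h ε' (Finset.ne_of_mem_erase hε')]]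
  abel

end Replace

/-! ### Rotations and Lovász's augmentation -/

section Augment

variable {D} {ε : ι × Bool} {A B : List V} {x y : V}

-- The edge of the path `A ++ x :: B` that enters `x` is exchanged for the one from `x` to the
-- beginning of the path.
lemma exists_exchange (hA : A ≠ []) (hε : D.fromEnd ε = A ++ x :: B)
    (hadj : ¬ D.graph.Adj x (D.tip ε)) :
    ∃ D' : PathSystem ι V, D'.fromEnd ε = A.reverse ++ x :: B ∧
      (∀ ε', ε'.1 ≠ ε.1 → D'.fromEnd ε' = D.fromEnd ε') ∧
      ¬ D'.graph.Adj x (A.getLast hA) ∧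
      D'.graph ⊔ edge x (A.getLast hA) = D.graph ⊔ edge x (D.tip ε) := by
  have hnd : (A ++ x :: B).Nodup := hε ▸ D.nodup_fromEnd ε
  have htip : A.head hA = D.tip ε := by simp [tip, hε, hA]
  set C := consecGraph A ⊔ consecGraph (x :: B) with hC
  have hold : consecGraph (D.fromEnd ε) = C ⊔ edge x (A.getLast hA) := by
    rw [hε, consecGraph_append_cons_of_ne_nil hA, hC, edge_comm, sup_right_comm]
  have hnew : consecGraph (A.reverse ++ x :: B) = C ⊔ edge x (D.tip ε) := by
    rw [consecGraph_append_cons_of_ne_nil (by simpa), consecGraph_reverse, List.getLast_reverse,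
      htip, hC, edge_comm, sup_right_comm]
  have hdisj : Disjoint (consecGraph (A.reverse ++ x :: B)) (D.others ε) := by
    rw [hnew, disjoint_sup_left]
    refine ⟨(D.disjoint_others ε).mono_left (hold ▸ le_sup_left), ?_⟩
    exact ((disjoint_edge _).2 hadj).symm.mono_right (D.others_le ε)
  obtain ⟨D', hD'ε, hD', hgraph⟩ :=
    exists_replace (by simp) (by simpa [List.nodup_append] using hnd) hdisj
  refine ⟨D', hD'ε, hD', ?_, ?_⟩
  · have hlast : (consecGraph (D.fromEnd ε)).Adj x (A.getLast hA) := by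
      rw [hold]
      exact .inr (by grind)
    have hothers : ¬ (D.others ε).Adj x (A.getLast hA) :=
      disjoint_left.1 (D.disjoint_others ε) _ _ hlast
    have hCx : ¬ C.Adj x (A.getLast hA) := by
      rintro (h | h)
      · grind [mem_of_consecGraph_adj h]
      · grind [mem_of_consecGraph_adj h.symm]
    have htip_ne : D.tip ε ≠ A.getLast hA := fun h =>
      hadj (h ▸ D.consecGraph_fromEnd_le ε hlast)
    rw [hgraph, hnew, sup_adj, sup_adj, edge_adj]
    grind
  · rw [hgraph, hnew, graph_eq_sup_others _ ε, hold]
    ac_rfl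

lemma exists_prepend (hx : x ∉ D.fromEnd ε) (hadj : ¬ D.graph.Adj x (D.tip ε)) :
    ∃ D' : PathSystem ι V, D'.fromEnd ε = x :: D.fromEnd ε ∧
      (∀ ε', ε'.1 ≠ ε.1 → D'.fromEnd ε' = D.fromEnd ε') ∧
      D'.graph = D.graph ⊔ edge x (D.tip ε) := by
  have hcons : consecGraph (x :: D.fromEnd ε) =
      edge x (D.tip ε) ⊔ consecGraph (D.fromEnd ε) := by
    obtain ⟨y, l, hl⟩ := List.exists_cons_of_ne_nil (D.fromEnd_ne_nil ε)
    simp only [tip, hl, consecGraph_cons_cons, List.head_cons]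
  obtain ⟨D', hD'ε, hD', hgraph⟩ := exists_replace (D := D) (ε := ε) (l := x :: D.fromEnd ε)
    (by simp) (by simpa [hx] using D.nodup_fromEnd ε) <| by
      rw [hcons, disjoint_sup_left]
      exact ⟨((disjoint_edge _).2 hadj).symm.mono_right (D.others_le ε), D.disjoint_others ε⟩
  refine ⟨D', hD'ε, hD', ?_⟩
  rw [hgraph, hcons, graph_eq_sup_others _ ε]
  ac_rfl

lemma pair_infix_fromEnd_of_ne {D' : PathSystem ι V} {ε' : ι × Bool} {w : V} (hne : ε' ≠ ε)
    (hε : D.fromEnd ε = A ++ x :: B) (hD'ε : D'.fromEnd ε = A.reverse ++ x :: B)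
    (hD' : ∀ ε', ε'.1 ≠ ε.1 → D'.fromEnd ε' = D.fromEnd ε') :
    [w, x] <:+: D'.fromEnd ε' ↔ [w, x] <:+: D.fromEnd ε' := by
  by_cases hi : ε'.1 = ε.1
  · have hnd := D.nodup_fromEnd ε
    rw [hε, List.nodup_append, List.nodup_cons] at hnd
    rw [fromEnd_eq_reverse_of_ne _ hne hi, fromEnd_eq_reverse_of_ne _ hne hi, hε, hD'ε]
    simp only [List.reverse_append, List.reverse_cons, List.append_assoc, List.singleton_append,
      List.reverse_reverse]
    rw [pair_infix_append_cons_iff (by grind) (by grind),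
      pair_infix_append_cons_iff (by grind) (by grind)]
  · rw [hD' ε' hi]

lemma exists_rotate (hx : x ∈ D.fromEnd ε) (hne : D.tip ε ≠ x)
    (hadj : ¬ D.graph.Adj x (D.tip ε)) :
    ∃ D' : PathSystem ι V, [D'.tip ε, x] <:+: D.fromEnd ε ∧
      (∀ ε' ≠ ε, D'.tip ε' = D.tip ε' ∧
        ∀ w, [w, x] <:+: D'.fromEnd ε' ↔ [w, x] <:+: D.fromEnd ε') ∧
      ¬ D'.graph.Adj x (D'.tip ε) ∧
      D'.graph ⊔ edge x (D'.tip ε) = D.graph ⊔ edge x (D.tip ε) := by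
  obtain ⟨A, B, hε⟩ := List.append_of_mem hx
  have hA : A ≠ [] := by
    rintro rfl
    simp [tip, hε] at hne
  obtain ⟨D', hD'ε, hD', hnadj, hgraph⟩ := exists_exchange hA hε hadj
  have htip : D'.tip ε = A.getLast hA := by simp [tip, hD'ε, hA]
  have htips := tip_eq_of_ne hD' (by simp [hε, hD'ε, List.getLast_append_of_ne_nil])
  refine ⟨D', htip ▸ ⟨A.dropLast, B, ?_⟩, fun ε' hε' => ⟨htips ε' hε', fun w =>
    pair_infix_fromEnd_of_ne hε' hε hD'ε hD'⟩, htip ▸ hnadj, htip ▸ hgraph⟩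
  rw [hε]
  conv_rhs => rw [← List.dropLast_append_getLast hA]
  simp

/- As long as `x` lies on the path of the end under consideration, rotate that path, discard the
end, and continue from an end at the predecessor of `x`. -/
lemma exists_augment_of_closed [Fintype ι] [DecidableEq V] (T : Finset (ι × Bool))
    (hT : ∀ ε ∈ T, ∀ r, [r, x] <:+: D.fromEnd ε → ∃ ε' ∈ T, D.tip ε' = r)
    (hεT : ε ∈ T) (hne : D.tip ε ≠ x) (hadj : ¬ D.graph.Adj x (D.tip ε)) :
    ∃ D' : PathSystem ι V, D'.graph = D.graph ⊔ edge x (D.tip ε) ∧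
      D'.endCount + Pi.single (D.tip ε) 1 = D.endCount + Pi.single x 1 := by
  classical
  induction T using Finset.strongInduction generalizing D ε with
  | H T ih =>
  by_cases hx : x ∈ D.fromEnd ε
  · obtain ⟨D', hpred, hD', hnadj, hgraph⟩ := exists_rotate hx hne hadj
    have hclosed : ∀ δ ∈ T, ∀ s, [s, x] <:+: D.fromEnd δ →
        ∃ δ' ∈ T.erase ε, D'.tip δ' = s := by
      intro δ hδ s hs
      obtain ⟨δ', hδ'T, rfl⟩ := hT δ hδ s hs
      have hδ' : δ' ≠ ε := by
        rintro rfl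
        exact hadj (D.adj_of_pair_infix_fromEnd hs).symm
      exact ⟨δ', Finset.mem_erase.2 ⟨hδ', hδ'T⟩, (hD' δ' hδ').1⟩
    obtain ⟨ε', hε'T, hε'⟩ := hclosed ε hεT _ hpred
    rw [← hε'] at hpred hnadj hgraph
    obtain ⟨D'', hgraph', hcount⟩ := ih (T.erase ε) (Finset.erase_ssubset hεT)
      (fun δ hδ s hs => hclosed δ (Finset.mem_of_mem_erase hδ) s <|
        ((hD' δ (Finset.ne_of_mem_erase hδ)).2 s).1 hs)
      hε'T (D.adj_of_pair_infix_fromEnd hpred).ne hnadj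
    refine ⟨D'', hgraph'.trans hgraph, ?_⟩
    have hcount' := endCount_add_single fun δ hδ => (hD' δ hδ).1
    rw [← hε'] at hcount'
    rw [← add_left_inj (Pi.single (D'.tip ε') 1), add_right_comm, hcount, add_right_comm, hcount',
      add_right_comm]
  · obtain ⟨D', hD'ε, hD', hgraph⟩ := exists_prepend hx hadj
    refine ⟨D', hgraph, ?_⟩
    rw [endCount_add_single
      (tip_eq_of_ne hD' (by simp [hD'ε, List.getLast_cons, D.fromEnd_ne_nil]))]
    simp [tip, hD'ε]

lemma exists_augment [Fintype ι] [DecidableEq V] (hne : x ≠ y) (hadj : ¬ D.graph.Adj x y)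
    (hy : 1 ≤ D.endCount y) (hx : ∀ w, D.graph.Adj x w → 1 ≤ D.endCount w) :
    ∃ D' : PathSystem ι V, D'.graph = D.graph ⊔ edge x y ∧
      D'.endCount + Pi.single y 1 = D.endCount + Pi.single x 1 := by
  obtain ⟨ε, rfl⟩ := D.one_le_endCount_iff.1 hy
  refine exists_augment_of_closed .univ (fun δ _ r hr => ?_) (Finset.mem_univ ε) hne.symm hadj
  simpa using D.one_le_endCount_iff.1 (hx r (D.adj_of_pair_infix_fromEnd hr).symm)

lemma exists_augment_pair [Fintype ι] [DecidableEq V] {u : V}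
    (hu : ∀ w, ¬ D.graph.Adj u w) (hxy : x ≠ y) (hux : u ≠ x) (huy : u ≠ y)
    (hx : 1 ≤ D.endCount x) (hy : 2 ≤ D.endCount y) :
    ∃ D' : PathSystem ι V, D'.graph = D.graph ⊔ edge u y ⊔ edge u x ∧ 2 ≤ D'.endCount u := by
  obtain ⟨D₁, hgraph₁, hcount₁⟩ :=
    D.exists_augment huy (hu y) (by omega) fun w hw => absurd hw (hu w)
  have hcount₁v (v : V) := congrFun hcount₁ v
  simp only [Pi.add_apply] at hcount₁v
  have hadj₁ (w : V) (hw : D₁.graph.Adj u w) : w = y := by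
    have := hu w
    rw [hgraph₁, sup_adj, edge_adj] at hw
    grind
  obtain ⟨D₂, hgraph₂, hcount₂⟩ := D₁.exists_augment hux (fun h => hxy (hadj₁ x h))
    (by grind) (by grind)
  have := congrFun hcount₂ u
  simp only [Pi.add_apply] at this
  exact ⟨D₂, by rw [hgraph₂, hgraph₁], by grind⟩

/- Follow, from a chosen end at each vertex `v ≠ c`, the predecessor of `x`. As every edge at `x` is
entered by a single end, predecessors are unique, so the orbit of `c` has to avoid the orbit of one
of `y₁` and `y₂`. -/
lemma exists_closed_ends [Fintype ι] [DecidableEq V] {c y₁ y₂ : V}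
    (hc : ∀ v ≠ c, 1 ≤ D.endCount v) (h₁₂ : y₁ ≠ y₂)
    (hadj₁ : ¬ D.graph.Adj x y₁) (hadj₂ : ¬ D.graph.Adj x y₂) :
    ∃ T : Finset (ι × Bool),
      (∀ ε ∈ T, ∀ r, [r, x] <:+: D.fromEnd ε → ∃ ε' ∈ T, D.tip ε' = r) ∧
      ∃ ε ∈ T, D.tip ε = y₁ ∨ D.tip ε = y₂ := by
  classical
  choose e he using fun (v : V) (hv : v ≠ c) => D.one_le_endCount_iff.1 (hc v hv)
  let R (w v : V) : Prop := ∃ hv : v ≠ c, [w, x] <:+: D.fromEnd (e v hv)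
  have hR : Relator.RightUnique R := by
    rintro w v v' ⟨hv, hwv⟩ ⟨hv', hwv'⟩
    rw [← he v hv, ← he v' hv', D.eq_of_pair_infix_fromEnd hwv hwv']
  have hnot {y z} (hyz : y ≠ z) (hy : ¬ D.graph.Adj x y) : ¬ Relation.ReflTransGen R y z := by
    intro h
    obtain rfl | ⟨v, ⟨_, hv⟩, _⟩ := h.cases_head
    · exact hyz rfl
    · exact hy (D.adj_of_pair_infix_fromEnd hv).symm
  have hne_c {v} (hv : ¬ Relation.ReflTransGen R c v) : v ≠ c := by
    rintro rfl
    exact hv .refl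
  let T : Finset (ι × Bool) :=
    {ε | ∃ v, ∃ hv : ¬ Relation.ReflTransGen R c v, e v (hne_c hv) = ε}
  refine ⟨T, ?_, ?_⟩
  · intro ε hε r hr
    obtain ⟨v, hv, rfl⟩ := (Finset.mem_filter_univ _).1 hε
    have hcr : ¬ Relation.ReflTransGen R c r := fun h => hv (h.tail ⟨_, hr⟩)
    exact ⟨_, (Finset.mem_filter_univ _).2 ⟨r, hcr, rfl⟩, he r _⟩
  · by_cases hcy₁ : Relation.ReflTransGen R c y₁
    · have hcy₂ : ¬ Relation.ReflTransGen R c y₂ := fun hcy₂ =>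
        (Relation.ReflTransGen.total_of_right_unique hR hcy₁ hcy₂).elim (hnot h₁₂ hadj₁)
          (hnot h₁₂.symm hadj₂)
      exact ⟨_, (Finset.mem_filter_univ _).2 ⟨y₂, hcy₂, rfl⟩, .inr (he y₂ _)⟩
    · exact ⟨_, (Finset.mem_filter_univ _).2 ⟨y₁, hcy₁, rfl⟩, .inl (he y₁ _)⟩

lemma exists_augment_or [Fintype ι] [DecidableEq V] {c y₁ y₂ : V}
    (hc : ∀ v ≠ c, 1 ≤ D.endCount v) (h₁₂ : y₁ ≠ y₂) (h₁ : y₁ ≠ x) (h₂ : y₂ ≠ x)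
    (hadj₁ : ¬ D.graph.Adj x y₁) (hadj₂ : ¬ D.graph.Adj x y₂) :
    ∃ y, (y = y₁ ∨ y = y₂) ∧ ∃ D' : PathSystem ι V, D'.graph = D.graph ⊔ edge x y ∧
      D'.endCount + Pi.single y 1 = D.endCount + Pi.single x 1 := by
  obtain ⟨T, hT, ε, hεT, hε⟩ := exists_closed_ends hc h₁₂ hadj₁ hadj₂
  exact ⟨D.tip ε, hε, exists_augment_of_closed T hT hεT (by grind) (by grind)⟩

end Augment

/-! ### Prescribed numbers of path ends -/

/-- The system of the one-vertex paths at the vertices `g i`. -/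
def ofVertices (g : ι → V) : PathSystem ι V where
  path i := [g i]
  ne_nil i := List.cons_ne_nil _ _
  nodup i := List.nodup_singleton _
  disjoint i j _ := by simp [consecGraph_singleton]

lemma graph_ofVertices (g : ι → V) : (ofVertices g).graph = ⊥ := by
  simp [graph, ofVertices, consecGraph_singleton]

lemma endCount_ofVertices [Fintype ι] [DecidableEq V] (g : ι → V) :
    (ofVertices g).endCount = ∑ i, Pi.single (g i) 2 := by
  have htip (ε : ι × Bool) : (ofVertices g).tip ε = g ε.1 := by
    cases h : ε.2 <;> simp [tip, fromEnd, ofVertices, h]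
  simp only [endCount_eq_sum, htip, Fintype.sum_prod_type, Fintype.sum_bool, ← Pi.single_add]

lemma exists_graph_eq_bot [Finite V] [DecidableEq V] {f : V → ℕ} (hf : ∀ v, Even (f v)) :
    ∃ (k : ℕ) (D : PathSystem (Fin k) V), D.graph = ⊥ ∧ D.endCount = f := by
  cases nonempty_fintype V
  let e := (Fintype.equivFin (Σ v, Fin (f v / 2))).symm
  refine ⟨_, ofVertices fun i => (e i).1, graph_ofVertices _, ?_⟩
  rw [endCount_ofVertices, Equiv.sum_comp e fun s => Pi.single s.1 2, Fintype.sum_sigma]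
  ext v
  simp [Finset.sum_apply, Pi.single_apply, Nat.div_mul_cancel (hf v).two_dvd]

lemma exists_adj_and_forall_eq {H : SimpleGraph V} {f : V → ℕ} (hH : H ≠ ⊥)
    (hzero : {v ∈ H.support | f v = 0}.Subsingleton) :
    ∃ x y, H.Adj x y ∧ f x ≠ 0 ∧ ∀ v ∈ H.support, f v = 0 → v = y := by
  by_cases h : ∃ y ∈ H.support, f y = 0
  · obtain ⟨y, ⟨x, hyx⟩, hy⟩ := h
    have hyzero : ∀ v ∈ H.support, f v = 0 → v = y := fun v hv h0 =>
      hzero ⟨hv, h0⟩ ⟨⟨x, hyx⟩, hy⟩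
    exact ⟨x, y, hyx.symm, fun hx => hyx.ne (hyzero x ⟨y, hyx.symm⟩ hx).symm, hyzero⟩
  · push Not at h
    obtain ⟨x, y, hxy⟩ := ne_bot_iff_exists_adj.1 hH
    exact ⟨x, y, hxy, h x ⟨y, hxy⟩, fun v hv h0 => absurd h0 (h v hv)⟩

theorem exists_graph_eq_endCount_eq [Finite V] [DecidableEq V] (H : SimpleGraph V) (f : V → ℕ)
    (hpar : ∀ v, Even (f v + ndeg H v)) (hzero : {v ∈ H.support | f v = 0}.Subsingleton) :
    ∃ (k : ℕ) (D : PathSystem (Fin k) V), D.graph = H ∧ D.endCount = f := by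
  induction H using WellFoundedLT.induction generalizing f with
  | ind H ih =>
  obtain rfl | hH := eq_or_ne H ⊥
  · exact exists_graph_eq_bot fun v => by simpa [ndeg] using hpar v
  obtain ⟨x, y, hxy, hfx, hfy⟩ := exists_adj_and_forall_eq hH hzero
  obtain ⟨f', hf'⟩ : ∃ f' : V → ℕ, f' + Pi.single x 1 = f + Pi.single y 1 := by
    have hle : Pi.single x 1 ≤ f := update_le_iff.2
      ⟨Nat.one_le_iff_ne_zero.2 hfx, fun _ _ => Nat.zero_le _⟩
    exact ⟨f - Pi.single x 1 + Pi.single y 1, by rw [add_right_comm, tsub_add_cancel_of_le hle]⟩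
  have hf'v (v : V) : f' v + Pi.single (M := fun _ => ℕ) x 1 v =
      f v + Pi.single (M := fun _ => ℕ) y 1 v := congrFun hf' v
  have hpos : ∀ v ∈ H.support, v ≠ x → 1 ≤ f' v := by
    intro v hv hvx
    have h1 := hf'v v
    have h2 := hfy v hv
    grind
  obtain ⟨H', hH', hadj⟩ : ∃ H', H' ⊔ edge x y = H ∧ ¬ H'.Adj x y :=
    ⟨H \ edge x y, sdiff_sup_cancel ((edge_le_iff H).2 (.inr hxy)), by simp [edge_adj, hxy.ne]⟩
  have hle : H' ≤ H := hH' ▸ le_sup_left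
  have hpar' : ∀ v, Even (f' v + ndeg H' v) := by
    intro v
    have h1 := hf'v v
    have h2 := hpar v
    have h3 := congrFun (ndeg_sup_edge hxy.ne hadj) v
    rw [hH', Pi.add_apply, Pi.add_apply] at h3
    grind
  obtain ⟨k, D, rfl, rfl⟩ := ih H' (lt_of_le_of_ne hle fun h => hadj (h ▸ hxy)) f' hpar'
    fun v hv w hw => by grind [support_mono hle hv.1, support_mono hle hw.1]
  obtain ⟨D', hgraph, hcount⟩ := D.exists_augment hxy.ne hadj
    (hpos y ⟨x, hxy.symm⟩ hxy.ne') fun w hw => hpos w ⟨x, (hle hw).symm⟩ hw.ne'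
  rw [hf', add_left_inj] at hcount
  exact ⟨k, D', hgraph.trans hH', hcount⟩

/-! ### Adding a path, embedding, and gluing -/

/-- The path system `D` with the further path `l`. -/
def cons {k : ℕ} (D : PathSystem (Fin k) V) (l : List V) (hne : l ≠ []) (hnd : l.Nodup)
    (hdisj : Disjoint (consecGraph l) D.graph) : PathSystem (Fin (k + 1)) V where
  path := Fin.cons l D.path
  ne_nil := Fin.cases hne D.ne_nil
  nodup := Fin.cases hnd D.nodup
  disjoint := by
    have h := disjoint_iSup_iff.1 hdisj
    intro i j hij
    induction i using Fin.cases <;> induction j using Fin.cases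
    · exact absurd rfl hij
    · exact h _
    · exact (h _).symm
    · exact D.disjoint (ne_of_apply_ne Fin.succ hij)

section Cons

variable {k : ℕ} {D : PathSystem (Fin k) V} {l : List V} {hne : l ≠ []} {hnd : l.Nodup}
  {hdisj : Disjoint (consecGraph l) D.graph} {x y : V}

lemma graph_cons : (D.cons l hne hnd hdisj).graph = consecGraph l ⊔ D.graph := by
  refine eq_of_forall_ge_iff fun H => ?_
  simp [graph, cons, iSup_le_iff, Fin.forall_fin_succ]

lemma endCount_le_endCount_cons [DecidableEq V] :
    D.endCount ≤ (D.cons l hne hnd hdisj).endCount := by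
  rw [endCount_eq_sum, endCount_eq_sum, Fintype.sum_prod_type, Fintype.sum_prod_type,
    Fin.sum_univ_succ]
  exact le_add_self

lemma exists_sup_edge [DecidableEq V] (hxy : x ≠ y) (hadj : ¬ D.graph.Adj x y) :
    ∃ D' : PathSystem (Fin (k + 1)) V, D'.graph = D.graph ⊔ edge x y ∧
      D.endCount ≤ D'.endCount := by
  have hpair : consecGraph [x, y] = edge x y := by
    rw [consecGraph_cons_cons, consecGraph_singleton, sup_bot_eq]
  have hdisj : Disjoint (consecGraph [x, y]) D.graph :=
    hpair ▸ ((disjoint_edge D.graph).2 hadj).symm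
  refine ⟨D.cons [x, y] (by simp) (by simpa using hxy) hdisj, ?_, endCount_le_endCount_cons⟩
  rw [graph_cons, hpair, sup_comm]

end Cons

/-- The image of a path system under an embedding of the vertex types. -/
def map {W : Type*} (f : V ↪ W) : PathSystem ι W where
  path i := (D.path i).map f
  ne_nil i := by simpa using D.ne_nil i
  nodup i := (D.nodup i).map f.injective
  disjoint i j hij := by
    simp only [consecGraph_map, disjoint_left, map_adj]
    rintro _ _ ⟨v, w, hvw, rfl, rfl⟩ ⟨v', w', hvw', hv, hw⟩
    obtain rfl := f.injective hv
    obtain rfl := f.injective hw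
    exact disjoint_left.1 (D.disjoint hij) _ _ hvw hvw'

lemma graph_map {W : Type*} (f : V ↪ W) : (D.map f).graph = D.graph.map f := by
  have hgc : GaloisConnection (SimpleGraph.map f) (SimpleGraph.comap f) :=
    fun G H => map_le_iff_le_comap f G H
  simp only [graph, map, consecGraph_map, hgc.l_iSup]

lemma endCount_map_apply {W : Type*} [Fintype ι] [DecidableEq V] [DecidableEq W] (f : V ↪ W)
    (v : V) : (D.map f).endCount (f v) = D.endCount v := by
  have htip (ε : ι × Bool) : (D.map f).tip ε = f (D.tip ε) := by
    cases h : ε.2 <;> simp [tip, fromEnd, map, h]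
  simp [endCount, htip]

variable {D} in
lemma exists_sup_consecGraph [Fintype ι] [DecidableEq V] {u : V} {l : List V}
    (hu : 1 ≤ D.endCount u) (hnd : (u :: l).Nodup) (hl : ∀ v ∈ l, v ∉ D.graph.support) :
    ∃ D' : PathSystem ι V, D'.graph = D.graph ⊔ consecGraph (u :: l) ∧
      D.endCount ≤ D'.endCount + Pi.single u 1 := by
  induction l generalizing D u with
  | nil => exact ⟨D, by simp [consecGraph_singleton], le_self_add⟩
  | cons x l ih =>
    have hux : x ≠ u := by grind
    have hx (w : V) : ¬ D.graph.Adj x w := fun h => hl x (by simp) ⟨w, h⟩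
    obtain ⟨D₁, hgraph₁, hcount₁⟩ :=
      D.exists_augment hux (hx u) hu fun w hw => absurd hw (hx w)
    have hx₁ : 1 ≤ D₁.endCount x := by
      have := congrFun hcount₁ x
      simp only [Pi.add_apply, Pi.single_eq_same, Pi.single_eq_of_ne hux] at this
      omega
    obtain ⟨D₂, hgraph₂, hcount₂⟩ := ih hx₁ hnd.of_cons fun v hv h => by
      obtain ⟨w, hw⟩ := (mem_support _).1 h
      rw [hgraph₁, sup_adj, edge_adj] at hw
      have hvw : ¬ D.graph.Adj v w := fun h => hl v (by simp [hv]) ⟨w, h⟩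
      grind
    refine ⟨D₂, ?_, ?_⟩
    · rw [hgraph₂, hgraph₁, consecGraph_cons_cons, sup_assoc, edge_comm]
    · refine le_of_add_le_add_right (a := Pi.single x 1) ?_
      rw [← hcount₁, add_right_comm]
      gcongr

variable {D} in
lemma exists_sup_consecGraph_append [Fintype ι] [DecidableEq V] {u : V} {l₁ l₂ : List V}
    (hu : 2 ≤ D.endCount u) (hnd : (l₁ ++ u :: l₂).Nodup)
    (hl : ∀ v ∈ l₁ ++ u :: l₂, v ∈ D.graph.support → v = u) :
    ∃ D' : PathSystem ι V, D'.graph = D.graph ⊔ consecGraph (l₁ ++ u :: l₂) := by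
  obtain ⟨D₂, hgraph₂, hcount₂⟩ := exists_sup_consecGraph (D := D) (u := u) (l := l₂)
    (by omega) (by grind) fun v hv h => by grind
  have hu₂ : 1 ≤ D₂.endCount u := by
    have hle : D.endCount u ≤ D₂.endCount u + 1 := by simpa using hcount₂ u
    omega
  obtain ⟨D₁, hgraph₁, -⟩ := exists_sup_consecGraph (l := l₁.reverse) hu₂
    (by grind) fun v hv h => by
    obtain ⟨w, hw⟩ := (mem_support _).1 h
    rw [hgraph₂, sup_adj] at hw
    obtain hw | hw := hw
    · grind [(mem_support D.graph).2 ⟨w, hw⟩]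
    · grind [mem_of_consecGraph_adj hw]
  refine ⟨D₁, ?_⟩
  rw [hgraph₁, hgraph₂, consecGraph_append_cons, ← consecGraph_reverse (l := l₁ ++ [u]),
    List.reverse_append, List.reverse_singleton, List.singleton_append, sup_assoc,
    sup_comm (consecGraph (u :: l₂))]

/-! ### From path systems to path decompositions -/

lemma isChain_path (i : ι) : (D.path i).IsChain D.graph.Adj := by
  rw [List.isChain_iff_forall_rel_of_append_cons_cons]
  intro v w l₁ l₂ h
  have hinfix : [v, w] <:+: D.path i := ⟨l₁, l₂, by simp [h]⟩
  exact le_iSup (fun i => consecGraph (D.path i)) i (consecGraph_adj_of_infix (D.nodup i) hinfix)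

/-- The `i`-th path as a walk in the decomposed graph, bundled with its end vertices. -/
def walk (i : ι) : Σ a b : V, D.graph.Walk a b :=
  ⟨_, _, Walk.ofSupport (D.path i) (D.ne_nil i) (D.isChain_path i)⟩

lemma support_walk (i : ι) : (D.walk i).2.2.support = D.path i :=
  Walk.support_ofSupport _ _

lemma mk_mem_edges_walk_iff {i : ι} {v w : V} :
    s(v, w) ∈ (D.walk i).2.2.edges ↔ (consecGraph (D.path i)).Adj v w := by
  rw [← Walk.infix_support_iff_mem_edges, support_walk, consecGraph_adj_iff (D.nodup i)]

/-- The path decomposition consisting of the nontrivial paths of a path system. -/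
noncomputable def pathDecomp [Fintype ι] : PathDecomp D.graph where
  paths := (Finset.univ.filter fun i => 0 < (D.walk i).2.2.length).toList.map D.walk
  nontrivial := by simp
  isPath := by
    simp [Walk.isPath_def, support_walk, D.nodup]
  edgeDisjoint := by
    rw [List.pairwise_map]
    refine List.Pairwise.imp (fun {i j} hij e => ?_) (Finset.nodup_toList _)
    induction e with
    | _ v w =>
      rw [mk_mem_edges_walk_iff, mk_mem_edges_walk_iff]
      exact disjoint_left.1 (D.disjoint hij) v w
  covers e he := by
    induction e with
    | _ v w =>
      obtain ⟨i, hi⟩ := iSup_adj.1 he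
      have hmem := D.mk_mem_edges_walk_iff.2 hi
      have hpos : 0 < (D.walk i).2.2.length := by
        rw [← Walk.length_edges]
        exact List.length_pos_of_mem hmem
      exact ⟨D.walk i, by simpa using ⟨i, hpos, rfl⟩, hmem⟩

theorem pn_graph_le [Fintype ι] : pn D.graph ≤ Fintype.card ι :=
  calc pn D.graph ≤ pdCard D.pathDecomp := Nat.sInf_le ⟨_, rfl⟩
    _ ≤ Fintype.card ι := by
      simpa [pdCard, pathDecomp] using Finset.card_le_univ _

end PathSystem

/-! ### Two path ends at one vertex -/

/-- The vertices of even degree. -/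
def evenVertices (G : SimpleGraph V) : Set V := {v | Even (ndeg G v)}

section DoubleEnd

variable {G H K : SimpleGraph V} {c u w₁ w₂ x y : V}

lemma evenVertices_eq_sdiff_pair [Finite V] (hw : w₁ ≠ w₂) (hu₁ : u ≠ w₁) (hu₂ : u ≠ w₂)
    (h₁ : ¬ H.Adj u w₁) (h₂ : ¬ H.Adj u w₂) (hK : H ⊔ edge u w₁ ⊔ edge u w₂ = K)
    (hw₁ : w₁ ∈ evenVertices K) (hw₂ : w₂ ∈ evenVertices K) :
    evenVertices H = evenVertices K \ {w₁, w₂} := by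
  classical
  have h₂' : ¬ (H ⊔ edge u w₁).Adj u w₂ := by grind
  have hdeg (v : V) : ndeg K v = ndeg H v + Pi.single (M := fun _ => ℕ) u 1 v +
      Pi.single (M := fun _ => ℕ) w₁ 1 v + Pi.single (M := fun _ => ℕ) u 1 v +
      Pi.single (M := fun _ => ℕ) w₂ 1 v := by
    rw [← hK, ndeg_sup_edge hu₂ h₂', ndeg_sup_edge hu₁ h₁]
    rfl
  ext v
  have := hdeg v
  grind [evenVertices]

theorem exists_pathSystem_of_mem_evenVertices [Finite V] [DecidableEq V]
    (hc : c ∈ evenVertices H) :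
    ∃ (k : ℕ) (D : PathSystem (Fin k) V), 2 * k + 2 = Nat.card V + (evenVertices H).ncard ∧
      D.graph = H ∧ (∀ v ≠ c, 1 ≤ D.endCount v) ∧
      ∀ v ∈ evenVertices H, v ≠ c → D.endCount v = 2 := by
  classical
  cases nonempty_fintype V
  let f (v : V) : ℕ := if v = c then 0 else if v ∈ evenVertices H then 2 else 1
  have hpar (v : V) : Even (f v + ndeg H v) := by
    simp only [f]
    split_ifs with hvc hv
    · rwa [hvc, zero_add]
    · exact even_two.add hv
    · exact odd_one.add_odd (Nat.not_even_iff_odd.1 hv)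
  obtain ⟨k, D, hgraph, hcount⟩ := PathSystem.exists_graph_eq_endCount_eq H f
    hpar fun v hv w hw => by grind
  refine ⟨k, D, ?_, hgraph, fun v hv => by grind, fun v hv hvc => by grind⟩
  have hsum : ∑ v, f v + 2 = Nat.card V + (evenVertices H).ncard := by
    have hf (v) : f v + (if v = c then 2 else 0) = 1 + if v ∈ evenVertices H then 1 else 0 := by
      grind
    have := Finset.sum_congr rfl fun v (_ : v ∈ Finset.univ) => hf v
    rw [Finset.sum_add_distrib, Finset.sum_add_distrib] at this
    rw [Set.ncard_eq_toFinset_card', ← Set.filter_mem_univ_eq_toFinset]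
    simpa using this
  rw [← hsum, ← hcount, D.sum_endCount, Fintype.card_fin]

lemma exists_mem_ne_ne {α : Type*} {s : Set α} (hs : 3 ≤ s.ncard) (a b : α) :
    ∃ c ∈ s, c ≠ a ∧ c ≠ b := by
  have hlt : ({a, b} : Set α).ncard < s.ncard := by
    grind [Set.ncard_insert_le a {b}, Set.ncard_singleton]
  obtain ⟨c, hc, hcab⟩ := Set.exists_mem_notMem_of_ncard_lt_ncard hlt
  exact ⟨c, hc, by simpa using hcab⟩

lemma exists_two_le_endCount_of_mem_evenVertices [Finite V] [DecidableEq V]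
    (hK : 3 ≤ (evenVertices K).ncard) (hu : u ∈ evenVertices K) :
    ∃ (k : ℕ) (D : PathSystem (Fin k) V), 2 * k + 2 ≤ Nat.card V + (evenVertices K).ncard ∧
      D.graph = K ∧ 2 ≤ D.endCount u := by
  obtain ⟨c, hc, hcu, -⟩ := exists_mem_ne_ne hK u u
  obtain ⟨k, D, hk, hgraph, -, hcount⟩ := exists_pathSystem_of_mem_evenVertices hc
  exact ⟨k, D, hk.le, hgraph, (hcount u hu hcu.symm).ge⟩

lemma exists_sup_edge_sup_edge_eq (h₁ : K.Adj u w₁) (h₂ : K.Adj u w₂) :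
    ∃ H : SimpleGraph V, H ⊔ edge u w₁ ⊔ edge u w₂ = K ∧ ¬ H.Adj u w₁ ∧ ¬ H.Adj u w₂ := by
  have hle : edge u w₁ ⊔ edge u w₂ ≤ K :=
    sup_le ((edge_le_iff K).2 (.inr h₁)) ((edge_le_iff K).2 (.inr h₂))
  refine ⟨K \ (edge u w₁ ⊔ edge u w₂), ?_, ?_, ?_⟩
  · rw [sup_assoc, sdiff_sup_cancel hle]
  · simp [edge_adj, h₁.ne]
  · simp [edge_adj, h₂.ne]

lemma exists_two_le_endCount_of_nontrivial [Finite V] [DecidableEq V]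
    (hK : 3 ≤ (evenVertices K).ncard) (hu : u ∉ evenVertices K)
    (hnt : (K.neighborSet u ∩ evenVertices K).Nontrivial) :
    ∃ (k : ℕ) (D : PathSystem (Fin k) V), 2 * k + 2 ≤ Nat.card V + (evenVertices K).ncard ∧
      D.graph = K ∧ 2 ≤ D.endCount u := by
  obtain ⟨w₁, ⟨hu₁, hw₁⟩, w₂, ⟨hu₂, hw₂⟩, hne⟩ := hnt
  obtain ⟨c, hc, hc₁, hc₂⟩ := exists_mem_ne_ne hK w₁ w₂
  obtain ⟨H, hH, h₁, h₂⟩ := exists_sup_edge_sup_edge_eq hu₁ hu₂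
  have hevens := evenVertices_eq_sdiff_pair hne hu₁.ne hu₂.ne h₁ h₂ hH hw₁ hw₂
  obtain ⟨k, D, hk, rfl, hpos, -⟩ :=
    exists_pathSystem_of_mem_evenVertices (H := H) (c := c) (by simp [hevens, hc, hc₁, hc₂])
  have hcard : (evenVertices D.graph).ncard + 2 = (evenVertices K).ncard := by
    rw [hevens, ← Set.ncard_pair hne]
    exact Set.ncard_sdiff_add_ncard_of_subset (by grind)
  obtain ⟨y, hy, D₁, hgraph₁, hcount₁⟩ :=
    PathSystem.exists_augment_or hpos hne hu₁.ne' hu₂.ne' h₁ h₂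
  obtain ⟨y', hyy', hy', hH'⟩ : ∃ y', y ≠ y' ∧ (y' = w₁ ∨ y' = w₂) ∧
      D.graph ⊔ edge u y ⊔ edge u y' = K := by
    obtain rfl | rfl := hy
    · exact ⟨w₂, hne, .inr rfl, hH⟩
    · exact ⟨w₁, hne.symm, .inl rfl, by rw [sup_right_comm, hH]⟩
  obtain ⟨D₂, hgraph₂, hcount₂⟩ := D₁.exists_sup_edge (x := u) (y := y') (by grind) (by
    rw [hgraph₁, sup_adj, edge_adj]
    grind)
  refine ⟨k + 1, D₂, by omega, by rw [hgraph₂, hgraph₁, hH'], ?_⟩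
  have hu₀ : 1 ≤ D.endCount u := hpos u fun h => hu (h ▸ hc)
  have hu₁ := congrFun hcount₁ u
  have hu₂ := hcount₂ u
  simp only [Pi.add_apply] at hu₁
  grind

lemma spanningCoe_induce_ne_sup_edge_sup_edge (hN : K.neighborSet u = {x, y}) :
    (K.induce {v | v ≠ u}).spanningCoe ⊔ edge u y ⊔ edge u x = K := by
  have hspan (v w : V) : (K.induce {v | v ≠ u}).spanningCoe.Adj v w ↔
      v ≠ u ∧ w ≠ u ∧ K.Adj v w := by
    simp [map_adj, and_left_comm]
  have hadj (w : V) : K.Adj u w ↔ w = x ∨ w = y := by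
    rw [← mem_neighborSet, hN, Set.mem_insert_iff, Set.mem_singleton_iff]
  ext v w
  rw [sup_adj, sup_adj, hspan, edge_adj, edge_adj]
  grind [hadj v, hadj w, K.adj_comm v w, K.irrefl (v := u)]

lemma exists_two_le_endCount_of_neighborSet_eq_pair [Finite V] [DecidableEq V]
    (hxy : x ≠ y) (hN : K.neighborSet u = {x, y}) (hyu : y ≠ u)
    (hK : 3 ≤ (evenVertices (K.induce {v | v ≠ u})).ncard)
    (hy : ⟨y, hyu⟩ ∈ evenVertices (K.induce {v | v ≠ u})) :
    ∃ (k : ℕ) (D : PathSystem (Fin k) V),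
      2 * k + 2 ≤ Nat.card V + (evenVertices (K.induce {v | v ≠ u})).ncard ∧
      D.graph = K ∧ 2 ≤ D.endCount u := by
  let f : {v | v ≠ u} ↪ V := Function.Embedding.subtype _
  have hux : K.Adj u x := hN.superset (by simp)
  have huy : K.Adj u y := hN.superset (by simp)
  obtain ⟨c, hc, hcx, hcy⟩ := exists_mem_ne_ne hK ⟨x, hux.ne'⟩ ⟨y, hyu⟩
  obtain ⟨k, D₀, hk, hgraph₀, hpos, hcount⟩ := exists_pathSystem_of_mem_evenVertices hc
  have hcard : Nat.card {v | v ≠ u} ≤ Nat.card V := Nat.card_le_card_of_injective f f.injective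
  have hD : (D₀.map f).graph = (K.induce {v | v ≠ u}).spanningCoe := by
    rw [PathSystem.graph_map, hgraph₀]
  have hu (w : V) : ¬ (D₀.map f).graph.Adj u w := by
    rw [hD, map_adj]
    rintro ⟨v, _, -, hv, -⟩
    exact v.2 hv
  have hcountx : 1 ≤ (D₀.map f).endCount x :=
    (D₀.endCount_map_apply f ⟨x, hux.ne'⟩).symm ▸ hpos _ hcx.symm
  have hcounty : 2 ≤ (D₀.map f).endCount y :=
    (D₀.endCount_map_apply f ⟨y, hyu⟩).symm ▸ (hcount _ hy hcy.symm).ge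
  obtain ⟨D, hgraph, hcountu⟩ :=
    PathSystem.exists_augment_pair hu hxy hux.ne huy.ne hcountx hcounty
  exact ⟨k, D, by omega, by rw [hgraph, hD, spanningCoe_induce_ne_sup_edge_sup_edge hN], hcountu⟩

end DoubleEnd

/-! ### Connection vertices -/

/-- The degree conditions at `u` that an ESET graph `K` with connection vertex `u` satisfies for
`e = 3`. In the first alternative `e` is the number of vertices of even degree in `K`; in the
second, `u` has degree two and the vertices of even degree are those of `K - u`. -/
def IsEvenConnection (K : SimpleGraph V) (u : V) (e : ℕ) : Prop :=
  ((evenVertices K).ncard = e ∧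
    (u ∈ evenVertices K ∨ (K.neighborSet u ∩ evenVertices K).Nontrivial)) ∨
  ∃ (x y : V) (hy : y ≠ u), x ≠ y ∧ K.neighborSet u = {x, y} ∧
    (evenVertices (K.induce {v | v ≠ u})).ncard = e ∧
    ⟨y, hy⟩ ∈ evenVertices (K.induce {v | v ≠ u})

lemma IsSETGraph.ncard_evenVertices {K : SimpleGraph V} (hK : IsSETGraph K) :
    (evenVertices K).ncard = 3 := by
  obtain ⟨⟨a, b, c, hab, hac, hbc, heven, -⟩, -⟩ := hK
  exact Set.ncard_eq_three.2 ⟨a, b, c, hab, hac, hbc, heven⟩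

lemma IsESETWithConn.isEvenConnection {K : SimpleGraph V} {u : V} (hK : IsESETWithConn K u) :
    IsEvenConnection K u 3 := by
  obtain hK | ⟨x, y, hx, hy, hN, hK, hxo, hye⟩ := hK
  · refine .inl ⟨hK.ncard_evenVertices, ?_⟩
    obtain hu | hu := Nat.even_or_odd (ndeg K u)
    · exact .inl hu
    · obtain ⟨w₁, w₂, hne, h₁, h₂, he₁, he₂⟩ := hK.2 u hu
      exact .inr ⟨w₁, ⟨h₁, he₁⟩, w₂, ⟨h₂, he₂⟩, hne⟩
  · have hxy : x ≠ y := by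
      rintro rfl
      exact Nat.not_even_iff_odd.2 hxo hye
    exact .inr ⟨x, y, hy, hxy, hN, hK.ncard_evenVertices, hye⟩

lemma IsEvenConnection.exists_two_le_endCount [Finite V] [DecidableEq V] {K : SimpleGraph V}
    {u : V} {e : ℕ} (hK : IsEvenConnection K u e) (he : 3 ≤ e) :
    ∃ (k : ℕ) (D : PathSystem (Fin k) V), 2 * k + 2 ≤ Nat.card V + e ∧ D.graph = K ∧
      2 ≤ D.endCount u := by
  obtain ⟨rfl, hu⟩ | ⟨x, y, hy, hxy, hN, rfl, hye⟩ := hK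
  · by_cases hu' : u ∈ evenVertices K
    · exact exists_two_le_endCount_of_mem_evenVertices he hu'
    · exact exists_two_le_endCount_of_nontrivial he hu' (hu.resolve_left hu')
  · exact exists_two_le_endCount_of_neighborSet_eq_pair hxy hN hy he hye

lemma eq_map_sup_consecGraph_support {G : SimpleGraph V} {S : Set V} {K : SimpleGraph S} {a b : V}
    {P : G.Walk a b} (hP : P.IsPath)
    (hedges : G.edgeSet = Sym2.map Subtype.val '' K.edgeSet ∪ {e | e ∈ P.edges}) :
    G = K.map (Function.Embedding.subtype _) ⊔ consecGraph P.support := by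
  have hpath : {e | e ∈ P.edges} = (consecGraph P.support).edgeSet := by
    ext e
    induction e with
    | _ v w =>
      rw [Set.mem_ofPred_eq, ← Walk.infix_support_iff_mem_edges, mem_edgeSet,
        consecGraph_adj_iff hP.support_nodup]
  rw [← edgeSet_inj, hedges, edgeSet_sup, edgeSet_map, hpath]
  rfl

theorem eset_plus_path_path_number_general (G : SimpleGraph V) (S : Set V) [Finite S]
    (K : SimpleGraph S) (u : V) (hu : u ∈ S) {e : ℕ} (he : 3 ≤ e)
    (hK : IsEvenConnection K ⟨u, hu⟩ e) (a b : V) (P : G.Walk a b) (hP : P.IsPath)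
    (hedges : G.edgeSet = Sym2.map Subtype.val '' K.edgeSet ∪ {e | e ∈ P.edges})
    (hshare : S ∩ {v | v ∈ P.support} = {u}) :
    2 * pn G + 2 ≤ S.ncard + e := by
  classical
  obtain ⟨k, D, hk, rfl, hcount⟩ := hK.exists_two_le_endCount he
  have huP : u ∈ P.support := (hshare.superset rfl).2
  obtain ⟨l₁, l₂, hl⟩ := List.append_of_mem huP
  let f : S ↪ V := Function.Embedding.subtype _
  have hmeet (v : V) (hv : v ∈ l₁ ++ u :: l₂) (hvD : v ∈ (D.map f).graph.support) : v = u := by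
    obtain ⟨w, hw⟩ := (mem_support _).1 hvD
    rw [PathSystem.graph_map, map_adj] at hw
    obtain ⟨v, -, -, rfl, -⟩ := hw
    exact hshare.subset ⟨v.2, hl ▸ hv⟩
  obtain ⟨D', hD'⟩ := PathSystem.exists_sup_consecGraph_append
    ((D.endCount_map_apply f ⟨u, hu⟩).symm ▸ hcount) (hl ▸ hP.support_nodup) hmeet
  have hG : G = D'.graph := by
    rw [hD', PathSystem.graph_map, ← hl, ← eq_map_sup_consecGraph_support hP hedges]
  have hpn : pn G ≤ k := by
    simpa [← hG] using D'.pn_graph_le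
  rw [Nat.card_coe_set_eq] at hk
  omega

theorem eset_plus_path_path_number [Fintype V] (G : SimpleGraph V)
    (S : Set V) (K : SimpleGraph ↥S) (u : V) (hu : u ∈ S)
    (hK : IsESETWithConn K ⟨u, hu⟩)
    (a b : V) (P : G.Walk a b) (hP : P.IsPath)
    (hedges : G.edgeSet = Sym2.map Subtype.val '' K.edgeSet ∪ {e | e ∈ P.edges})
    (hdisj : Disjoint (Sym2.map Subtype.val '' K.edgeSet) {e | e ∈ P.edges})
    (hshare : S ∩ {v | v ∈ P.support} = {u})
    (hspan : S ∪ {v | v ∈ P.support} = Set.univ) :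
    pn G ≤ (S.ncard + 1) / 2 := by
  have := eset_plus_path_path_number_general G S K u hu le_rfl hK.isEvenConnection a b P hP
    hedges hshare
  omega
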